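/- arXiv:1312.4377 — 4 statements merged into one kernel-verified Lean document; each statement's English description precedes it below -/
import Mathlib

section
/- Let f : [0,∞) → [0,∞) be amenable and tightly bounded. Then f is metric-preserving, i.e. for every metric space (X,d), the composition f∘d is a metric on X. -/
def IsMetric {X : Type*} (d : X → X → ℝ) : Prop :=
  (∀ x y, 0 ≤ d x y) ∧ (∀ x y, d x y = 0 ↔ x = y) ∧
  (∀ x y, d x y = d y x) ∧ (∀ x y z, d x y ≤ d x z + d z y)

def IsUltrametric {X : Type*} (d : X → X → ℝ) : Prop :=
  (∀ x y, 0 ≤ d x y) ∧ (∀ x y, d x y = 0 ↔ x = y) ∧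
  (∀ x y, d x y = d y x) ∧ (∀ x y z, d x y ≤ max (d x z) (d z y))

def MetricPreserving (f : ℝ → ℝ) : Prop :=
  ∀ (X : Type) (d : X → X → ℝ), IsMetric d → IsMetric fun x y => f (d x y)

def UltrametricPreserving (f : ℝ → ℝ) : Prop :=
  ∀ (X : Type) (d : X → X → ℝ), IsUltrametric d → IsUltrametric fun x y => f (d x y)

def MetricUltrametricPreserving (f : ℝ → ℝ) : Prop :=
  ∀ (X : Type) (d : X → X → ℝ), IsMetric d → IsUltrametric fun x y => f (d x y)

def UltrametricMetricPreserving (f : ℝ → ℝ) : Prop :=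
  ∀ (X : Type) (d : X → X → ℝ), IsUltrametric d → IsMetric fun x y => f (d x y)

def Amenable (f : ℝ → ℝ) : Prop :=
  ∀ x, 0 ≤ x → (f x = 0 ↔ x = 0)

/-- A semimetric: a distance function satisfying every metric axiom except possibly the triangle
inequality. -/
def IsSemimetric {X : Type*} (d : X → X → ℝ) : Prop :=
  (∀ x y, 0 ≤ d x y) ∧ (∀ x y, d x y = 0 ↔ x = y) ∧ (∀ x y, d x y = d y x)

/-- Tight boundedness of a function on `[0, ∞)`, encoded as a function on `ℝ` whose values at
negative arguments are left unconstrained. -/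
def TightlyBounded (f : ℝ → ℝ) : Prop :=
  ∃ v : ℝ, 0 < v ∧ ∀ x : ℝ, 0 < x → v ≤ f x ∧ f x ≤ 2 * v

section

variable {X : Type*} {d : X → X → ℝ}

theorem IsMetric.isSemimetric (hd : IsMetric d) : IsSemimetric d :=
  let ⟨nonneg, eq_zero_iff, symm, _⟩ := hd
  ⟨nonneg, eq_zero_iff, symm⟩

theorem IsSemimetric.self (hd : IsSemimetric d) (x : X) : d x x = 0 :=
  (hd.2.1 x x).2 rfl

theorem IsSemimetric.symm (hd : IsSemimetric d) (x y : X) : d x y = d y x :=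
  hd.2.2 x y

theorem IsSemimetric.pos_of_ne (hd : IsSemimetric d) {x y : X} (hxy : x ≠ y) : 0 < d x y :=
  (hd.1 x y).lt_of_ne' (mt (hd.2.1 x y).1 hxy)

theorem triangle_of_pairwise_mem_Icc {v : ℝ} (hself : ∀ x, d x x = 0)
    (hd : Pairwise fun x y => d x y ∈ Set.Icc v (2 * v)) (x y z : X) :
    d x y ≤ d x z + d z y := by
  rcases eq_or_ne x z with rfl | hxz
  · rw [hself, zero_add]
  rcases eq_or_ne z y with rfl | hzy
  · rw [hself, add_zero]
  have two_mul_le : 2 * v ≤ d x z + d z y := by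
    linarith [(hd hxz).1, (hd hzy).1]
  have le_two_mul : d x y ≤ 2 * v := by
    rcases eq_or_ne x y with rfl | hxy
    · rw [hself]
      linarith [(hd hxz).1, (hd hxz).2]
    · exact (hd hxy).2
  exact le_two_mul.trans two_mul_le

theorem isMetric_of_pairwise_mem_Icc {v : ℝ} (hv : 0 < v) (hself : ∀ x, d x x = 0)
    (hsymm : ∀ x y, d x y = d y x) (hd : Pairwise fun x y => d x y ∈ Set.Icc v (2 * v)) :
    IsMetric d := by
  have pos_of_ne {x y : X} (hxy : x ≠ y) : 0 < d x y := hv.trans_le (hd hxy).1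
  refine ⟨fun x y => ?_, fun x y => ⟨fun hxy => ?_, ?_⟩, hsymm,
    triangle_of_pairwise_mem_Icc hself hd⟩
  · rcases eq_or_ne x y with rfl | hxy
    · exact (hself x).ge
    · exact (pos_of_ne hxy).le
  · by_contra hne
    exact (pos_of_ne hne).ne' hxy
  · rintro rfl
    exact hself x

theorem stmt1_general {f : ℝ → ℝ} (hf₀ : f 0 = 0) (hf : TightlyBounded f)
    (hd : IsSemimetric d) : IsMetric fun x y => f (d x y) := by
  obtain ⟨v, hv, hbounds⟩ := hf
  exact isMetric_of_pairwise_mem_Icc hv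
    (fun x => (congrArg f (hd.self x)).trans hf₀)
    (fun x y => congrArg f (hd.symm x y))
    (fun _ _ hxy => hbounds _ (hd.pos_of_ne hxy))

end

theorem stmt1 (f : ℝ → ℝ) (hf : ∀ x, 0 ≤ x → 0 ≤ f x)
    (hamen : Amenable f)
    (htight : ∃ v : ℝ, 0 < v ∧ ∀ x : ℝ, 0 < x → v ≤ f x ∧ f x ≤ 2 * v) :
    MetricPreserving f :=
  fun _ _ hd => stmt1_general ((hamen 0 le_rfl).2 rfl) htight hd.isSemimetric
end

section
/- Let f : [0,∞) → [0,∞). Then f is ultrametric-preserving if and only if f is amenable and increasing on [0,∞). -/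
open Set
open scoped NNReal

theorem Amenable.nonneg_of_monotoneOn {f : ℝ → ℝ} (hf : Amenable f) (hmono : MonotoneOn f (Ici 0))
    {x : ℝ} (hx : 0 ≤ x) : 0 ≤ f x :=
  calc
    0 = f 0 := ((hf 0 le_rfl).mpr rfl).symm
    _ ≤ f x := hmono self_mem_Ici hx hx

theorem IsUltrametric.comp_of_amenable_of_monotoneOn {X : Type*} {d : X → X → ℝ}
    (hd : IsUltrametric d) {f : ℝ → ℝ} (hf : Amenable f) (hmono : MonotoneOn f (Ici 0)) :
    IsUltrametric fun x y => f (d x y) := by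
  obtain ⟨nonneg, eq_zero, symm, le_max⟩ := hd
  refine ⟨fun x y => hf.nonneg_of_monotoneOn hmono (nonneg x y),
    fun x y => (hf _ (nonneg x y)).trans (eq_zero x y),
    fun x y => congrArg f (symm x y), fun x y z => ?_⟩
  calc
    f (d x y) ≤ f (max (d x z) (d z y)) :=
      hmono (nonneg x y) (le_max_of_le_left (nonneg x z)) (le_max x y z)
    _ = max (f (d x z)) (f (d z y)) := hmono.map_max (nonneg x z) (nonneg z y)

/-- The ultrametric on `[0, ∞)` in which the distance between distinct points is the larger of the
two. It serves as a universal test space for ultrametric-preserving functions: for `a < b`, the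
points `0`, `a`, `b` form an isosceles triangle with sides `a`, `b`, `b`. -/
noncomputable def maxDist (x y : ℝ≥0) : ℝ :=
  if x = y then 0 else max (x : ℝ) y

theorem maxDist_self (x : ℝ≥0) : maxDist x x = 0 :=
  if_pos rfl

theorem maxDist_of_ne {x y : ℝ≥0} (h : x ≠ y) : maxDist x y = max (x : ℝ) y :=
  if_neg h

theorem maxDist_comm (x y : ℝ≥0) : maxDist x y = maxDist y x := by
  simp only [maxDist, eq_comm, max_comm]

theorem maxDist_of_lt {x y : ℝ≥0} (h : x < y) : maxDist x y = y := by
  rw [maxDist_of_ne h.ne, max_eq_right (NNReal.coe_le_coe.mpr h.le)]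

theorem maxDist_zero_left (x : ℝ≥0) : maxDist 0 x = x := by
  rcases eq_zero_or_pos x with rfl | hx
  · rw [maxDist_self, NNReal.coe_zero]
  · exact maxDist_of_lt hx

theorem maxDist_nonneg (x y : ℝ≥0) : 0 ≤ maxDist x y := by
  unfold maxDist
  positivity

theorem le_maxDist_left {x y : ℝ≥0} (h : x ≠ y) : (x : ℝ) ≤ maxDist x y :=
  (le_max_left _ _).trans_eq (maxDist_of_ne h).symm

theorem le_maxDist_right {x y : ℝ≥0} (h : x ≠ y) : (y : ℝ) ≤ maxDist x y :=
  (le_max_right _ _).trans_eq (maxDist_of_ne h).symm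

theorem maxDist_eq_zero {x y : ℝ≥0} : maxDist x y = 0 ↔ x = y := by
  refine ⟨fun h => ?_, fun h => h ▸ maxDist_self x⟩
  by_contra hne
  have hx : x = 0 :=
    NNReal.coe_eq_zero.mp (((le_maxDist_left hne).trans_eq h).antisymm x.coe_nonneg)
  have hy : y = 0 :=
    NNReal.coe_eq_zero.mp (((le_maxDist_right hne).trans_eq h).antisymm y.coe_nonneg)
  exact hne (hx.trans hy.symm)

theorem maxDist_le_max (x y z : ℝ≥0) : maxDist x y ≤ max (maxDist x z) (maxDist z y) := by
  rcases eq_or_ne x z with rfl | hxz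
  · exact le_max_right _ _
  rcases eq_or_ne z y with rfl | hzy
  · exact le_max_left _ _
  rcases eq_or_ne x y with rfl | hxy
  · exact (maxDist_self x).trans_le (le_max_of_le_left (maxDist_nonneg x z))
  · rw [maxDist_of_ne hxy]
    exact max_le_max (le_maxDist_left hxz) (le_maxDist_right hzy)

theorem isUltrametric_maxDist : IsUltrametric maxDist :=
  ⟨maxDist_nonneg, fun _ _ => maxDist_eq_zero, maxDist_comm, maxDist_le_max⟩

theorem UltrametricPreserving.amenable {f : ℝ → ℝ} (hf : UltrametricPreserving f) :
    Amenable f := by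
  intro x hx
  lift x to ℝ≥0 using hx
  obtain ⟨-, eq_zero, -, -⟩ := hf ℝ≥0 maxDist isUltrametric_maxDist
  calc
    f x = 0 ↔ f (maxDist 0 x) = 0 := by rw [maxDist_zero_left]
    _ ↔ 0 = x := eq_zero 0 x
    _ ↔ (x : ℝ) = 0 := by rw [eq_comm, NNReal.coe_eq_zero]

theorem UltrametricPreserving.monotoneOn {f : ℝ → ℝ} (hf : UltrametricPreserving f) :
    MonotoneOn f (Ici 0) := by
  intro a ha b hb hab
  lift a to ℝ≥0 using ha
  lift b to ℝ≥0 using hb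
  rcases (NNReal.coe_le_coe.mp hab).eq_or_lt with rfl | hlt
  · exact le_rfl
  obtain ⟨-, -, -, le_max⟩ := hf ℝ≥0 maxDist isUltrametric_maxDist
  calc
    f a = f (maxDist 0 a) := by rw [maxDist_zero_left]
    _ ≤ max (f (maxDist 0 b)) (f (maxDist b a)) := le_max 0 a b
    _ = f b := by rw [maxDist_zero_left, maxDist_comm, maxDist_of_lt hlt, max_self]

theorem stmt5 (f : ℝ → ℝ) (hf : ∀ x, 0 ≤ x → 0 ≤ f x) :
    UltrametricPreserving f ↔
      (Amenable f ∧ ∀ a b : ℝ, 0 ≤ a → a ≤ b → f a ≤ f b) := by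
  constructor
  · intro h
    exact ⟨h.amenable, fun a b ha hab => h.monotoneOn ha (ha.trans hab) hab⟩
  · rintro ⟨hamenable, hincr⟩ X d hd
    have hmono : MonotoneOn f (Ici 0) := fun a ha b _ hab => hincr a b ha hab
    exact hd.comp_of_amenable_of_monotoneOn hamenable hmono
end

section
/- If f : [0,∞) → [0,∞) is amenable and concave, then f is ultrametric-preserving. -/
/-!
A concave function that decreases somewhere lies below a line of negative slope from there on, so
on an unbounded interval it cannot stay bounded below. Hence a nonnegative concave function on
`[0, ∞)` is monotone, and a monotone function commutes with the maximum in the ultrametric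
inequality.
-/

theorem monotoneOn_of_concaveOn_of_bddBelow {𝕜 : Type*} [Field 𝕜] [LinearOrder 𝕜]
    [IsStrictOrderedRing 𝕜] {s : Set 𝕜} {f : 𝕜 → 𝕜} (hf : ConcaveOn 𝕜 s f) (hs : IsUpperSet s)
    (hbdd : BddBelow (f '' s)) : MonotoneOn f s := by
  intro a ha b hb hab
  by_contra! hlt
  obtain ⟨c, hc⟩ := hbdd
  have lower_bound : ∀ x ∈ s, c ≤ f x := fun x hx => hc (Set.mem_image_of_mem f hx)
  have a_lt_b : a < b := hab.lt_of_ne fun h => hlt.ne (congrArg f h.symm)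
  have slope_neg : (f b - f a) / (b - a) < 0 :=
    div_neg_of_neg_of_pos (sub_neg.mpr hlt) (sub_pos.mpr a_lt_b)
  set m := (f b - f a) / (b - a)
  -- The line of slope `m` through `(b, f b)` takes the value `c - 1` at `z`.
  let z := b + (c - 1 - f b) / m
  have b_lt_z : b < z :=
    lt_add_of_pos_right b (div_pos_of_neg_of_neg (by linarith [lower_bound b hb]) slope_neg)
  have hz : z ∈ s := hs b_lt_z.le hb
  have slope_le : (f z - f b) / (z - b) ≤ m := hf.slope_anti_adjacent ha hz a_lt_b b_lt_z
  have line_at_z : m * (z - b) = c - 1 - f b := by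
    rw [add_sub_cancel_left, mul_div_cancel₀ _ slope_neg.ne]
  have below_line : f z - f b ≤ m * (z - b) := (div_le_iff₀ (sub_pos.mpr b_lt_z)).mp slope_le
  linarith [lower_bound z hz]

theorem IsUltrametric.comp_monotoneOn {X : Type*} {d : X → X → ℝ} {f : ℝ → ℝ}
    (hd : IsUltrametric d) (hf : MonotoneOn f (Set.Ici 0)) (hamen : Amenable f) :
    IsUltrametric fun x y => f (d x y) := by
  obtain ⟨nonneg, eq_zero_iff, symm, ultra⟩ := hd
  have map_zero : f 0 = 0 := (hamen 0 le_rfl).mpr rfl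
  refine ⟨fun x y => ?_, fun x y => (hamen _ (nonneg x y)).trans (eq_zero_iff x y),
    fun x y => congrArg f (symm x y), fun x y z => ?_⟩
  · exact map_zero.ge.trans (hf Set.self_mem_Ici (nonneg x y) (nonneg x y))
  · calc f (d x y) ≤ f (max (d x z) (d z y)) :=
          hf (nonneg x y) (le_max_of_le_left (nonneg x z)) (ultra x y z)
      _ = max (f (d x z)) (f (d z y)) := hf.map_max (nonneg x z) (nonneg z y)

theorem stmt9 (f : ℝ → ℝ) (hf : ∀ x, 0 ≤ x → 0 ≤ f x)
    (hamen : Amenable f)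
    (hconc : ∀ x₁ x₂ t : ℝ, 0 ≤ x₁ → 0 ≤ x₂ → 0 ≤ t → t ≤ 1 →
      (1 - t) * f x₁ + t * f x₂ ≤ f ((1 - t) * x₁ + t * x₂)) :
    UltrametricPreserving f := by
  have concave : ConcaveOn ℝ (Set.Ici 0) f := by
    refine ⟨convex_Ici 0, fun x hx y hy a t _ ht hat => ?_⟩
    obtain rfl : a = 1 - t := eq_sub_of_add_eq hat
    exact hconc x y t hx hy ht (by linarith)
  have bddBelow : BddBelow (f '' Set.Ici 0) := ⟨0, Set.forall_mem_image.mpr hf⟩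
  have monotone : MonotoneOn f (Set.Ici 0) :=
    monotoneOn_of_concaveOn_of_bddBelow concave (isUpperSet_Ici 0) bddBelow
  exact fun _ _ hd => hd.comp_monotoneOn monotone hamen
end

section
/- Let f : [0,∞) → [0,∞). Then f is metric-ultrametric-preserving if and only if f is amenable and f is constant on (0,∞) (i.e. there exists c > 0 such that f(x) = c for all x > 0 and f(0) = 0). -/
/-!
An isosceles triangle with legs `a` and base `b` exists whenever `b ≤ 2 * a`, so the ultrametric
inequality after applying `f` forces `f b ≤ f a`. Doubling `a` repeatedly removes the restriction
on `b`, and exchanging `a` and `b` shows that `f` is constant on `(0, ∞)`. Conversely, such an `f`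
turns every metric into a multiple of the discrete one.
-/

theorem isMetric_dist (X : Type*) [MetricSpace X] : IsMetric (dist : X → X → ℝ) :=
  ⟨fun _ _ => dist_nonneg, fun _ _ => dist_eq_zero, dist_comm, fun x y z => dist_triangle x z y⟩

section

variable {X : Type*} [DecidableEq X]

/-- The distance function on `X` realizing isosceles triangles with apex `p`, legs `a` and base `b`:
`p` is at distance `a` from all other points, and those are at distance `b` from each other. -/
def isoscelesDist (p : X) (a b : ℝ) (x y : X) : ℝ :=
  if x = y then 0 else if x = p ∨ y = p then a else b

theorem isMetric_isoscelesDist (p : X) {a b : ℝ} (ha : 0 < a) (hb : 0 < b) (hab : b ≤ 2 * a) :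
    IsMetric (isoscelesDist p a b) := by
  refine ⟨fun x y => ?nonneg, fun x y => ?eq_zero, fun x y => ?symm, fun x y z => ?triangle⟩
  all_goals unfold isoscelesDist
  case nonneg => split_ifs <;> linarith
  case eq_zero => split_ifs <;> simp_all [ha.ne', hb.ne']
  case symm => simp only [eq_comm, or_comm]
  case triangle => grind

theorem isUltrametric_ite_eq {c : ℝ} (hc : 0 < c) :
    IsUltrametric fun x y : X => if x = y then 0 else c := by
  refine ⟨fun x y => ?nonneg, fun x y => ?eq_zero, fun x y => ?symm, fun x y z => ?ultrametric⟩
  case nonneg => positivity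
  case eq_zero => simp [hc.ne']
  case symm => simp only [eq_comm]
  case ultrametric => grind

end

namespace MetricUltrametricPreserving

variable {f : ℝ → ℝ} {a b : ℝ}

theorem amenable (h : MetricUltrametricPreserving f) : Amenable f := by
  intro x hx
  obtain ⟨-, eq_zero_iff, -⟩ := h ℝ dist (isMetric_dist ℝ)
  simpa [abs_of_nonneg hx] using eq_zero_iff x 0

theorem map_le_map_of_le_two_mul (h : MetricUltrametricPreserving f) (ha : 0 < a) (hb : 0 < b)
    (hab : b ≤ 2 * a) : f b ≤ f a := by
  obtain ⟨-, -, -, ultra⟩ := h (Fin 3) (isoscelesDist 2 a b) (isMetric_isoscelesDist 2 ha hb hab)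
  simpa [isoscelesDist] using ultra 0 1 2

theorem map_two_pow_mul_le (h : MetricUltrametricPreserving f) (ha : 0 < a) (n : ℕ) :
    f (2 ^ n * a) ≤ f a := by
  induction n with
  | zero => simp
  | succ n ih =>
    have doubling_le : f (2 ^ (n + 1) * a) ≤ f (2 ^ n * a) :=
      h.map_le_map_of_le_two_mul (by positivity) (by positivity) (by rw [pow_succ', mul_assoc])
    exact doubling_le.trans ih

theorem map_le_map_of_pos (h : MetricUltrametricPreserving f) (ha : 0 < a) (hb : 0 < b) :
    f b ≤ f a := by
  obtain ⟨n, hn⟩ := pow_unbounded_of_one_lt (b / a) one_lt_two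
  have hbn : b < 2 ^ n * a := (div_lt_iff₀ ha).1 hn
  calc
    f b ≤ f (2 ^ n * a) := h.map_le_map_of_le_two_mul (by positivity) hb (by linarith)
    _ ≤ f a := h.map_two_pow_mul_le ha n

theorem of_eq_const_of_pos {c : ℝ} (h0 : f 0 = 0) (hc : 0 < c) (hfc : ∀ x, 0 < x → f x = c) :
    MetricUltrametricPreserving f := by
  classical
  rintro X d ⟨d_nonneg, d_eq_zero, -⟩
  have f_comp_d : (fun x y => f (d x y)) = fun x y => if x = y then 0 else c := by
    funext x y
    split_ifs with hxy
    · rw [(d_eq_zero x y).2 hxy, h0]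
    · exact hfc _ ((d_nonneg x y).lt_of_ne' (mt (d_eq_zero x y).1 hxy))
  rw [f_comp_d]
  exact isUltrametric_ite_eq hc

end MetricUltrametricPreserving

theorem stmt12 (f : ℝ → ℝ) (hf : ∀ x, 0 ≤ x → 0 ≤ f x) :
    MetricUltrametricPreserving f ↔
      (f 0 = 0 ∧ ∃ c : ℝ, 0 < c ∧ ∀ x : ℝ, 0 < x → f x = c) := by
  constructor
  · intro h
    have f_one_ne_zero : f 1 ≠ 0 := (h.amenable 1 zero_le_one).not.2 one_ne_zero
    exact ⟨(h.amenable 0 le_rfl).2 rfl, f 1, (hf 1 zero_le_one).lt_of_ne' f_one_ne_zero,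
      fun x hx => (h.map_le_map_of_pos one_pos hx).antisymm (h.map_le_map_of_pos hx one_pos)⟩
  · rintro ⟨h0, c, hc, hfc⟩
    exact .of_eq_const_of_pos h0 hc hfc
end
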